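/- arXiv:1108.5716 — 2 statements merged into one kernel-verified Lean document; each statement's English description precedes it below -/
import Mathlib

section
/- Fix 0 < q < 1, 0 < a < q^{−1}, b < q^{−1}, c ∈ ℝ ∖ {0}, θ ∈ (0, π), and α ∈ ℝ with √(aq) < α < 1/√(aq), |α a c q| < 1 and |α b q/c| < 1; assume moreover (aq;q)_k ≠ 0, (αacq;q)_k ≠ 0 and (αbq/c;q)_k ≠ 0 for all 0 ≤ k ≤ n. Then the series ∑_{k=0}^{∞} (α^k (aq)^{k/2}/(q;q)_k)·p_n(q^k; a, b; q)·Q_k(cos θ; c√(aq), (b/c)√(q/a) | q) converges absolutely, and its sum equals (α^n (aq)^{n/2} (αacq^{n+1};q)_∞ (αbq^{n+1}/c;q)_∞)/((aq;q)_n (α√(aq) e^{iθ};q)_∞ (α√(aq) e^{−iθ};q)_∞) · p_n(cos θ; α√(aq), c√(aq), (b/c)√(q/a), √(aq)/α | q), where p_n(·;·,·,·,·|q) denotes the Askey–Wilson polynomial. -/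
/-- q-shifted factorial `(a;q)_k = ∏_{j=0}^{k-1} (1 - a q^j)`. -/
noncomputable def qPoch (q a : ℝ) (k : ℕ) : ℝ := ∏ j ∈ Finset.range k, (1 - a * q ^ j)

/-- Infinite q-shifted factorial `(a;q)_∞ = ∏_{j=0}^{∞} (1 - a q^j)`. -/
noncomputable def qPochInf (q a : ℝ) : ℝ := ∏' j : ℕ, (1 - a * q ^ j)

/-- Complex q-shifted infinite factorial `(a;q)_∞ = ∏_{j=0}^{∞} (1 - a q^j)`. -/
noncomputable def qPochInfC (q a : ℂ) : ℂ := ∏' j : ℕ, (1 - a * q ^ j)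

/-- Little q-Jacobi polynomial
`p_n(x;a,b;q) = ∑_{k=0}^{n} ((q^{−n};q)_k (abq^{n+1};q)_k)/((aq;q)_k (q;q)_k) (qx)^k`. -/
noncomputable def littleqJacobi (q a b : ℝ) (n : ℕ) (x : ℝ) : ℝ :=
  ∑ k ∈ Finset.range (n + 1),
    qPoch q (q ^ (-(n : ℤ))) k * qPoch q (a * b * q ^ (n + 1)) k /
      (qPoch q (a * q) k * qPoch q q k) * (q * x) ^ k

/-- Al-Salam–Chihara polynomials, defined by `Q_0 = 1`, `Q_1 = 2x − (c+d)` and the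
recurrence `2x Q_k = Q_{k+1} + (c+d)q^k Q_k + (1−q^k)(1−cdq^{k−1}) Q_{k−1}`. -/
noncomputable def alSalamChihara (q c d x : ℝ) : ℕ → ℝ
  | 0 => 1
  | 1 => 2 * x - (c + d)
  | (k + 2) => (2 * x - (c + d) * q ^ (k + 1)) * alSalamChihara q c d x (k + 1)
      - (1 - q ^ (k + 1)) * (1 - c * d * q ^ k) * alSalamChihara q c d x k

/-- Askey–Wilson polynomial for `x = cos θ`:
`p_n(x;A,B,C,D|q) = A^{−n}(AB;q)_n(AC;q)_n(AD;q)_n ∑_{k=0}^{n}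
((q^{−n};q)_k (ABCDq^{n−1};q)_k q^k)/((AB;q)_k (AC;q)_k (AD;q)_k (q;q)_k)
∏_{j=0}^{k−1}(1 − 2Aq^j x + A²q^{2j})`. -/
noncomputable def askeyWilson (q : ℝ) (n : ℕ) (A B C D x : ℝ) : ℝ :=
  A ^ (-(n : ℤ)) * qPoch q (A * B) n * qPoch q (A * C) n * qPoch q (A * D) n *
    ∑ k ∈ Finset.range (n + 1),
      qPoch q (q ^ (-(n : ℤ))) k * qPoch q (A * B * C * D * q ^ ((n : ℤ) - 1)) k * q ^ k /
          (qPoch q (A * B) k * qPoch q (A * C) k * qPoch q (A * D) k * qPoch q q k) *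
        ∏ j ∈ Finset.range k, (1 - 2 * A * q ^ j * x + A ^ 2 * q ^ (2 * j))


namespace ASC

lemma qPoch_succ (q a : ℝ) (k : ℕ) : qPoch q a (k + 1) = qPoch q a k * (1 - a * q ^ k) := by
  simp [qPoch, Finset.prod_range_succ]

lemma qPoch_qq_pos {q : ℝ} (hq : 0 < q) (hq1 : q < 1) (k : ℕ) : 0 < qPoch q q k := by
  unfold qPoch
  refine Finset.prod_pos fun j _ => ?_
  have : q ^ (j + 1) < 1 := pow_lt_one₀ hq.le hq1 (by omega)
  rw [pow_succ] at this
  linarith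

/-- normalised Al-Salam–Chihara polynomials -/
noncomputable def u (q c d x : ℝ) (k : ℕ) : ℝ := alSalamChihara q c d x k / qPoch q q k

lemma u_zero (q c d x : ℝ) : u q c d x 0 = 1 := by simp [u, alSalamChihara, qPoch]

lemma u_one {q : ℝ} (hq1 : q < 1) (c d x : ℝ) : u q c d x 1 * (1 - q) = 2 * x - (c + d) := by
  have : (1 - q) ≠ 0 := by linarith
  simp [u, alSalamChihara, qPoch]
  field_simp

lemma u_rec {q : ℝ} (hq : 0 < q) (hq1 : q < 1) (c d x : ℝ) (k : ℕ) :
    u q c d x (k + 2) * (1 - q ^ (k + 2)) =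
      (2 * x - (c + d) * q ^ (k + 1)) * u q c d x (k + 1) - (1 - c * d * q ^ k) * u q c d x k := by
  have h0 := (qPoch_qq_pos hq hq1 k).ne'
  have h1 : (1 - q * q ^ k) ≠ 0 := by
    have : q ^ (k + 1) < 1 := pow_lt_one₀ hq.le hq1 (by omega)
    rw [pow_succ] at this
    nlinarith
  have h2 : (1 - q * q ^ (k + 1)) ≠ 0 := by
    have : q ^ (k + 1 + 1) < 1 := pow_lt_one₀ hq.le hq1 (by omega)
    rw [pow_succ] at this
    nlinarith
  simp only [u, alSalamChihara, qPoch_succ]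
  have e1 : (1 - q ^ (k + 2)) = (1 - q * q ^ (k + 1)) := by ring
  have e2 : (1 - q ^ (k + 1)) = (1 - q * q ^ k) := by ring
  rw [e1, e2]
  generalize 1 - q * q ^ (k + 1) = y at *
  generalize 1 - q * q ^ k = y' at *
  field_simp

lemma im_bound {θ : ℝ} (hs : 0 < Real.sin θ) (v w : ℝ) :
    |v| ≤ Real.sqrt (w ^ 2 - 2 * Real.cos θ * w * v + v ^ 2) / Real.sin θ := by
  rw [le_div_iff₀ hs]
  apply Real.le_sqrt_of_sq_le
  rw [mul_pow, sq_abs]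
  nlinarith [sq_nonneg (w - Real.cos θ * v), Real.sin_sq_add_cos_sq θ]

lemma u_summable {q : ℝ} (hq : 0 < q) (hq1 : q < 1) (c d : ℝ) {θ : ℝ} (hs : 0 < Real.sin θ)
    {t : ℝ} (ht : 0 < t) (ht1 : t < 1) :
    Summable (fun k => |u q c d (Real.cos θ) k * t ^ k|) := by
  set x := Real.cos θ with hx
  set U := u q c d x with hU
  set e : ℂ := Complex.exp (θ * Complex.I) with he
  have hee : e = ⟨x, Real.sin θ⟩ := by
    apply Complex.ext
    · rw [he, Complex.exp_ofReal_mul_I_re]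
    · rw [he, Complex.exp_ofReal_mul_I_im]
  have hen : ‖e‖ = 1 := Complex.norm_exp_ofReal_mul_I θ
  -- w k = e * U (k+1) - U k
  set z : ℕ → ℂ := fun k => e * U (k + 1) - U k with hz
  have b1 : ∀ k, |U (k + 1)| ≤ ‖z k‖ / Real.sin θ := by
    intro k
    rw [le_div_iff₀ hs]
    refine le_trans ?_ (Complex.abs_im_le_norm _)
    simp [hz, hee, abs_mul, abs_of_pos hs, mul_comm]
  have b0 : ∀ k, |U k| ≤ ‖z k‖ / Real.sin θ := by
    intro k
    rw [le_div_iff₀ hs]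
    have : ‖z k‖ = ‖(starRingEnd ℂ) e * z k‖ := by
      rw [norm_mul, RCLike.norm_conj, hen, one_mul]
    rw [this]
    refine le_trans ?_ (Complex.abs_im_le_norm _)
    have e3 : ((starRingEnd ℂ) e * z k).im = Real.sin θ * U k := by
      simp [hz, hee]
      ring
    rw [e3, abs_mul, abs_of_pos hs, mul_comm]
  set K : ℝ := (2 * |x| + 1 + |c + d| + |c * d|) / (1 - q) / Real.sin θ * 2 with hK
  have hK0 : 0 ≤ K := by
    have : 0 < 1 - q := by linarith
    positivity
  have step : ∀ k, ‖z (k + 1)‖ ≤ (1 + K * q ^ k) * ‖z k‖ := by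
    intro k
    have hk2 : q ^ (k + 2) ≤ q := by
      simpa using pow_le_pow_of_le_one hq.le hq1.le (show 1 ≤ k + 2 by omega)
    have hk : 0 < q ^ k := pow_pos hq k
    have hd : 0 < 1 - q ^ (k + 2) := by linarith
    set δ : ℝ := q ^ k * (q ^ 2 * (2 * x * U (k + 1) - U k) - (c + d) * q * U (k + 1)
      + c * d * U k) / (1 - q ^ (k + 2)) with hδ
    have hU2 : U (k + 2) = 2 * x * U (k + 1) - U k + δ := by
      have := u_rec hq hq1 c d x k
      rw [hδ]
      field_simp
      rw [← hU] at this
      rw [this]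
      ring
    have hze : z (k + 1) = e * (z k + δ) := by
      have e4 : e * (starRingEnd ℂ) e = 1 := by
        rw [Complex.mul_conj, Complex.normSq_eq_norm_sq, hen]; simp
      have e5 : (2 * x : ℂ) = e + (starRingEnd ℂ) e := by
        rw [Complex.add_conj, hee]; simp
      simp only [hz]
      rw [show k + 1 + 1 = k + 2 from rfl, hU2]
      push_cast
      rw [e5]
      linear_combination (U (k + 1) : ℂ) * e4
    have hδb : |δ| ≤ K * q ^ k * ‖z k‖ := by
      set M := ‖z k‖ / Real.sin θ with hM
      have hM0 : 0 ≤ M := by positivity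
      have hq2 : q ^ 2 ≤ 1 := pow_le_one₀ hq.le hq1.le
      have hnum : |q ^ 2 * (2 * x * U (k + 1) - U k) - (c + d) * q * U (k + 1) + c * d * U k|
          ≤ (2 * |x| + 1 + |c + d| + |c * d|) * M := by
        have t1 : |q ^ 2 * (2 * x * U (k + 1) - U k)| ≤ 1 * (2 * |x| * M + M) := by
          rw [abs_mul, abs_of_nonneg (by positivity : 0 ≤ q ^ 2)]
          refine mul_le_mul hq2 ?_ (abs_nonneg _) zero_le_one
          refine (abs_sub _ _).trans (add_le_add ?_ (b0 k))
          rw [abs_mul, abs_mul, abs_two]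
          exact mul_le_mul_of_nonneg_left (b1 k) (by positivity)
        have t2 : |(c + d) * q * U (k + 1)| ≤ |c + d| * 1 * M := by
          rw [abs_mul, abs_mul, abs_of_pos hq]
          gcongr
          exact b1 k
        have t3 : |c * d * U k| ≤ |c * d| * M := by
          rw [abs_mul]
          exact mul_le_mul_of_nonneg_left (b0 k) (by positivity)
        refine (abs_add_le _ _).trans ?_
        have := abs_sub (q ^ 2 * (2 * x * U (k + 1) - U k)) ((c + d) * q * U (k + 1))
        nlinarith
      rw [hδ, abs_div, abs_mul, abs_of_pos hk, abs_of_pos hd]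
      have h1q : 0 < 1 - q := by linarith
      calc _ ≤ q ^ k * ((2 * |x| + 1 + |c + d| + |c * d|) * M) / (1 - q) := by
            gcongr
        _ = K / 2 * q ^ k * ‖z k‖ := by rw [hK, hM]; field_simp
        _ ≤ _ := by
            gcongr
            linarith
    rw [hze, norm_mul, hen, one_mul]
    refine (norm_add_le _ _).trans ?_
    rw [Complex.norm_real, Real.norm_eq_abs]
    linarith
  have hzs : Summable (fun k => z k * (t : ℂ) ^ k) := by
    obtain ⟨r, hr, hr1⟩ := exists_between ht1
    refine summable_of_ratio_norm_eventually_le hr1 ?_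
    have hlim : Filter.Tendsto (fun k : ℕ => (1 + K * q ^ k) * t) Filter.atTop
        (nhds ((1 + K * 0) * t)) :=
      ((tendsto_pow_atTop_nhds_zero_of_lt_one hq.le hq1).const_mul K |>.const_add 1).mul_const t
    have hev := hlim.eventually (gt_mem_nhds (show (1 + K * 0) * t < r by simpa using hr))
    filter_upwards [hev] with k hk
    have hnt : ‖(t : ℂ)‖ = t := by rw [Complex.norm_real, Real.norm_eq_abs, abs_of_pos ht]
    rw [norm_mul, norm_mul, norm_pow, norm_pow, hnt]
    calc ‖z (k + 1)‖ * t ^ (k + 1) ≤ ((1 + K * q ^ k) * ‖z k‖) * t ^ (k + 1) := by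
          gcongr
          exact step k
      _ = ((1 + K * q ^ k) * t) * (‖z k‖ * t ^ k) := by ring
      _ ≤ _ := by gcongr
  have := hzs.norm.mul_left (1 / Real.sin θ)
  refine Summable.of_nonneg_of_le (fun _ => abs_nonneg _) (fun k => ?_) this
  rw [norm_mul, norm_pow, Complex.norm_real, Real.norm_eq_abs, abs_mul, abs_pow]
  calc _ ≤ ‖z k‖ / Real.sin θ * |t| ^ k := by
        gcongr
        exact b0 k
    _ = _ := by ring

/-- generating function -/
noncomputable def G (q c d x t : ℝ) : ℝ := ∑' k, u q c d x k * t ^ k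

lemma G_step {q : ℝ} (hq : 0 < q) (hq1 : q < 1) (c d : ℝ) {θ : ℝ} (hs : 0 < Real.sin θ)
    {t : ℝ} (ht : 0 < t) (ht1 : t < 1) :
    (1 - 2 * t * Real.cos θ + t ^ 2) * G q c d (Real.cos θ) t =
      (1 - c * t) * (1 - d * t) * G q c d (Real.cos θ) (t * q) := by
  have htq : t * q < 1 := by nlinarith
  have s1 : Summable (fun k => u q c d (Real.cos θ) k * t ^ k) :=
    (u_summable hq hq1 c d hs ht ht1).of_abs
  have s2 : Summable (fun k => u q c d (Real.cos θ) k * (t * q) ^ k) :=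
    (u_summable hq hq1 c d hs (mul_pos ht hq) htq).of_abs
  set x := Real.cos θ
  have h1 := s1.hasSum
  have h2 := s2.hasSum
  change HasSum _ (G q c d x t) at h1
  change HasSum _ (G q c d x (t * q)) at h2
  have h1a := (hasSum_nat_add_iff' 1).mpr h1
  have h2a := (hasSum_nat_add_iff' 1).mpr h2
  have h1b := (hasSum_nat_add_iff' 2).mpr h1
  have h2b := (hasSum_nat_add_iff' 2).mpr h2
  simp only [Finset.sum_range_succ, Finset.sum_range_zero, u_zero, pow_zero, pow_one, zero_add,
    mul_one] at h1a h2a h1b h2b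
  have L := h1b.sub h2b
  have R := (((h1a.mul_left (2 * x * t)).sub (h2a.mul_left ((c + d) * t))).sub
    (h1.mul_left (t ^ 2))).add (h2.mul_left (c * d * t ^ 2))
  have hfun : (fun k => u q c d x (k + 2) * t ^ (k + 2) - u q c d x (k + 2) * (t * q) ^ (k + 2))
      = fun k => 2 * x * t * (u q c d x (k + 1) * t ^ (k + 1))
        - (c + d) * t * (u q c d x (k + 1) * (t * q) ^ (k + 1))
        - t ^ 2 * (u q c d x k * t ^ k) + c * d * t ^ 2 * (u q c d x k * (t * q) ^ k) := by
    funext k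
    have := u_rec hq hq1 c d x k
    simp only [mul_pow]
    linear_combination t ^ (k + 2) * this
  rw [hfun] at L
  have heq := L.unique R
  have := u_one hq1 c d x
  linear_combination heq + t * this

lemma G_iter {q : ℝ} (hq : 0 < q) (hq1 : q < 1) (c d : ℝ) {θ : ℝ} (hs : 0 < Real.sin θ)
    {t : ℝ} (ht : 0 < t) (ht1 : t < 1) (N : ℕ) :
    (∏ j ∈ Finset.range N, (1 - 2 * t * q ^ j * Real.cos θ + t ^ 2 * q ^ (2 * j)))
        * G q c d (Real.cos θ) t =
      qPoch q (t * c) N * qPoch q (t * d) N * G q c d (Real.cos θ) (t * q ^ N) := by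
  induction N with
  | zero => simp [qPoch]
  | succ N ih =>
    have hN : q ^ N ≤ 1 := pow_le_one₀ hq.le hq1.le
    have hN0 : 0 < q ^ N := pow_pos hq N
    have := G_step hq hq1 c d hs (mul_pos ht hN0) (by nlinarith : t * q ^ N < 1)
    rw [Finset.prod_range_succ, qPoch_succ, qPoch_succ]
    rw [show t * q ^ (N + 1) = t * q ^ N * q by ring]
    linear_combination (1 - 2 * t * q ^ N * Real.cos θ + t ^ 2 * q ^ (2 * N)) * ih +
      qPoch q (t * c) N * qPoch q (t * d) N * this

lemma G_tendsto {q : ℝ} (hq : 0 < q) (hq1 : q < 1) (c d : ℝ) {θ : ℝ} (hs : 0 < Real.sin θ)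
    {t : ℝ} (ht : 0 < t) (ht1 : t < 1) :
    Filter.Tendsto (fun N : ℕ => G q c d (Real.cos θ) (t * q ^ N)) Filter.atTop (nhds 1) := by
  have key := tendsto_tsum_of_dominated_convergence (𝓕 := Filter.atTop)
    (f := fun (N : ℕ) (k : ℕ) => u q c d (Real.cos θ) k * (t * q ^ N) ^ k)
    (g := fun k : ℕ => if k = 0 then (1 : ℝ) else 0)
    (u_summable hq hq1 c d hs ht ht1) ?_ ?_
  · simpa [G] using key
  · intro k
    by_cases hk : k = 0
    · simp [hk, u_zero]
    · simp only [hk, if_false]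
      have h1 : Filter.Tendsto (fun N : ℕ => t * q ^ N) Filter.atTop (nhds (t * 0)) :=
        (tendsto_pow_atTop_nhds_zero_of_lt_one hq.le hq1).const_mul t
      have h2 := (h1.pow k).const_mul (u q c d (Real.cos θ) k)
      simpa [hk] using h2
  · refine Filter.Eventually.of_forall fun N k => ?_
    have hN : q ^ N ≤ 1 := pow_le_one₀ hq.le hq1.le
    have hN0 : 0 < q ^ N := pow_pos hq N
    rw [Real.norm_eq_abs, abs_mul, abs_mul, abs_pow, abs_pow, abs_mul, abs_of_pos hN0]
    gcongr
    nlinarith [abs_nonneg t]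

lemma summable_geo {q : ℝ} (hq : 0 < q) (hq1 : q < 1) (a : ℂ) :
    Summable (fun j : ℕ => ‖-(a * (q : ℂ) ^ j)‖) := by
  have : Summable (fun j : ℕ => ‖a‖ * q ^ j) :=
    (summable_geometric_of_lt_one hq.le hq1).mul_left _
  refine this.congr fun j => ?_
  rw [norm_neg, norm_mul, norm_pow, Complex.norm_real, Real.norm_eq_abs, abs_of_pos hq]

lemma multC {q : ℝ} (hq : 0 < q) (hq1 : q < 1) (a : ℂ) :
    Multipliable (fun j : ℕ => 1 - a * (q : ℂ) ^ j) := by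
  simpa [sub_eq_add_neg] using multipliable_one_add_of_summable (summable_geo hq hq1 a)

lemma multR {q : ℝ} (hq : 0 < q) (hq1 : q < 1) (a : ℝ) :
    Multipliable (fun j : ℕ => 1 - a * q ^ j) := by
  have : Summable (fun j : ℕ => ‖-(a * q ^ j)‖) :=
    ((summable_geometric_of_lt_one hq.le hq1).mul_left a).neg.norm
  simpa [sub_eq_add_neg] using multipliable_one_add_of_summable this

lemma qPochInfC_ne {q : ℝ} (hq : 0 < q) (hq1 : q < 1) {a : ℂ} (ha : ‖a‖ < 1) :
    qPochInfC q a ≠ 0 := by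
  have := tprod_one_add_ne_zero_of_summable (f := fun j : ℕ => -(a * (q : ℂ) ^ j)) ?_
    (summable_geo hq hq1 a)
  · simpa [qPochInfC, sub_eq_add_neg] using this
  · intro j h
    have h1 : a * (q : ℂ) ^ j = 1 := by linear_combination -h
    have h2 : ‖a * (q : ℂ) ^ j‖ < 1 := by
      rw [norm_mul, norm_pow, Complex.norm_real, Real.norm_eq_abs, abs_of_pos hq]
      have hN : q ^ j ≤ 1 := pow_le_one₀ hq.le hq1.le
      have hN0 : 0 < q ^ j := pow_pos hq j
      nlinarith [norm_nonneg a]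
    rw [h1] at h2
    simp at h2

lemma qPochInf_split {q : ℝ} (hq : 0 < q) (hq1 : q < 1) (a : ℝ) (n : ℕ) :
    qPochInf q a = qPoch q a n * qPochInf q (a * q ^ n) := by
  have h : Multipliable (fun j : ℕ => 1 - a * q ^ (j + n)) := by
    refine (multR hq hq1 (a * q ^ n)).congr fun j => ?_
    ring
  have := Multipliable.prod_mul_tprod_nat_mul' (f := fun j : ℕ => 1 - a * q ^ j) h
  unfold qPochInf qPoch
  rw [← this]
  congr 1
  refine tprod_congr fun j => ?_
  ring

lemma G_eq {q : ℝ} (hq : 0 < q) (hq1 : q < 1) (c d : ℝ) {θ : ℝ} (hs : 0 < Real.sin θ)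
    {t : ℝ} (ht : 0 < t) (ht1 : t < 1) :
    qPochInfC q ((t : ℂ) * Complex.exp ((θ : ℂ) * Complex.I))
      * qPochInfC q ((t : ℂ) * Complex.exp (-(θ : ℂ) * Complex.I))
      * (G q c d (Real.cos θ) t : ℂ) = ((qPochInf q (t * c) * qPochInf q (t * d) : ℝ) : ℂ) := by
  have l1 := (multC hq hq1 ((t : ℂ) * Complex.exp ((θ : ℂ) * Complex.I))).tendsto_prod_tprod_nat
  have l2 := (multC hq hq1 ((t : ℂ) * Complex.exp (-(θ : ℂ) * Complex.I))).tendsto_prod_tprod_nat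
  have r1 := (multR hq hq1 (t * c)).tendsto_prod_tprod_nat
  have r2 := (multR hq hq1 (t * d)).tendsto_prod_tprod_nat
  have L := (l1.mul l2).mul_const (G q c d (Real.cos θ) t : ℂ)
  have R := (Complex.continuous_ofReal.tendsto _).comp
    ((r1.mul r2).mul (G_tendsto hq hq1 c d hs ht ht1))
  rw [mul_one] at R
  refine tendsto_nhds_unique L (R.congr fun N => ?_)
  have hN := G_iter hq hq1 c d hs ht ht1 N
  simp only [Function.comp, qPoch] at hN ⊢
  rw [← hN]
  push_cast
  congr 1
  rw [← Finset.prod_mul_distrib]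
  refine Finset.prod_congr rfl fun j _ => ?_
  have e1 : Complex.exp ((θ : ℂ) * Complex.I) * Complex.exp (-(θ : ℂ) * Complex.I) = 1 := by
    rw [← Complex.exp_add]; simp
  have e2 : 2 * Complex.cos θ =
      Complex.exp ((θ : ℂ) * Complex.I) + Complex.exp (-(θ : ℂ) * Complex.I) :=
    Complex.two_cos θ
  linear_combination (-(t : ℂ) * q ^ j) * e2 - (t : ℂ) ^ 2 * q ^ (2 * j) * e1

end ASC

/-- The spectral transform (built from Al-Salam–Chihara polynomials) of
`q^k ↦ α^k p_n(q^k;a,b;q)` is an explicit multiple of a four-parameter Askey–Wilson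
polynomial: a q-analogue of Koornwinder's formula mapping Jacobi polynomials to Wilson
polynomials under the Jacobi function transform. -/
theorem stmt_11 (q a b c α θ : ℝ) (n : ℕ) (hq : 0 < q) (hq1 : q < 1)
    (ha0 : 0 < a) (ha1 : a < q⁻¹) (hb : b < q⁻¹) (hc : c ≠ 0)
    (hθ0 : 0 < θ) (hθπ : θ < Real.pi)
    (hα1 : Real.sqrt (a * q) < α) (hα2 : α < 1 / Real.sqrt (a * q))
    (hαac : |α * a * c * q| < 1) (hαbc : |α * b * q / c| < 1)
    (haq : ∀ k ≤ n, qPoch q (a * q) k ≠ 0)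
    (hac : ∀ k ≤ n, qPoch q (α * a * c * q) k ≠ 0)
    (hbc : ∀ k ≤ n, qPoch q (α * b * q / c) k ≠ 0) :
    Summable (fun k : ℕ =>
      |α ^ k * Real.sqrt (a * q) ^ k / qPoch q q k * littleqJacobi q a b n (q ^ k)
        * alSalamChihara q (c * Real.sqrt (a * q)) (b / c * Real.sqrt (q / a))
            (Real.cos θ) k|) ∧
    ((∑' k : ℕ, α ^ k * Real.sqrt (a * q) ^ k / qPoch q q k * littleqJacobi q a b n (q ^ k)
        * alSalamChihara q (c * Real.sqrt (a * q)) (b / c * Real.sqrt (q / a))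
            (Real.cos θ) k : ℝ) : ℂ)
      = ((α ^ n * Real.sqrt (a * q) ^ n * qPochInf q (α * a * c * q ^ (n + 1))
            * qPochInf q (α * b * q ^ (n + 1) / c) / qPoch q (a * q) n : ℝ) : ℂ)
          / (qPochInfC (q : ℂ) (((α * Real.sqrt (a * q) : ℝ) : ℂ)
                * Complex.exp ((θ : ℂ) * Complex.I))
              * qPochInfC (q : ℂ) (((α * Real.sqrt (a * q) : ℝ) : ℂ)
                * Complex.exp (-(θ : ℂ) * Complex.I)))
        * ((askeyWilson q n (α * Real.sqrt (a * q)) (c * Real.sqrt (a * q))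
              (b / c * Real.sqrt (q / a)) (Real.sqrt (a * q) / α) (Real.cos θ) : ℝ) : ℂ) := by
  have hs : 0 < Real.sin θ := Real.sin_pos_of_pos_of_lt_pi hθ0 hθπ
  have haq0 : 0 < a * q := mul_pos ha0 hq
  obtain ⟨s, hsdef⟩ : ∃ s, s = Real.sqrt (a * q) := ⟨_, rfl⟩
  have hs0 : 0 < s := hsdef ▸ Real.sqrt_pos.mpr haq0
  have hss : s * s = a * q := hsdef ▸ Real.mul_self_sqrt haq0.le
  have hqa : Real.sqrt (q / a) = s / a := by
    rw [hsdef, Real.sqrt_eq_iff_mul_self_eq (by positivity) (by positivity)]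
    rw [← hsdef, div_mul_div_comm, hss]
    field_simp
  rw [hqa]
  rw [← hsdef] at hα1 hα2 ⊢
  have hα0 : 0 < α := hs0.trans hα1
  set A := α * s with hA
  have hA0 : 0 < A := mul_pos hα0 hs0
  have hA1 : A < 1 := by rwa [lt_div_iff₀ hs0] at hα2
  set C := c * s with hC
  set D := b / c * (s / a) with hD
  have hAC : A * C = α * a * c * q := by
    rw [hA, hC]; linear_combination α * c * hss
  have hAD : A * D = α * b * q / c := by
    rw [hA, hD]; field_simp; linear_combination b * hss
  have hAE : A * (s / α) = a * q := by
    rw [hA, ← hss]; field_simp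
  set x := Real.cos θ with hx
  -- coefficients
  set w : ℕ → ℝ := fun j => qPoch q (q ^ (-(n : ℤ))) j * qPoch q (a * b * q ^ (n + 1)) j /
      (qPoch q (a * q) j * qPoch q q j) * q ^ j with hw
  have hterm : ∀ k : ℕ, α ^ k * s ^ k / qPoch q q k * littleqJacobi q a b n (q ^ k)
        * alSalamChihara q C D x k
      = ∑ j ∈ Finset.range (n + 1), w j * (ASC.u q C D x k * (A * q ^ j) ^ k) := by
    intro k
    rw [littleqJacobi, Finset.mul_sum, Finset.sum_mul]
    refine Finset.sum_congr rfl fun j _ => ?_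
    simp only [hw, ASC.u, hA, mul_pow, ← pow_mul, mul_comm j k]
    ring
  have hsj : ∀ j : ℕ, Summable (fun k => |ASC.u q C D x k * (A * q ^ j) ^ k|) := fun j => by
    have hN : q ^ j ≤ 1 := pow_le_one₀ hq.le hq1.le
    have hN0 : 0 < q ^ j := pow_pos hq j
    exact ASC.u_summable hq hq1 C D hs (mul_pos hA0 hN0) (by nlinarith)
  have hHS : HasSum (fun k : ℕ => α ^ k * s ^ k / qPoch q q k * littleqJacobi q a b n (q ^ k)
        * alSalamChihara q C D x k)
      (∑ j ∈ Finset.range (n + 1), w j * ASC.G q C D x (A * q ^ j)) := by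
    simp only [hterm]
    exact hasSum_sum fun j _ => ((hsj j).of_abs.hasSum).mul_left _
  refine ⟨hHS.summable.abs, ?_⟩
  rw [hHS.tsum_eq]
  have hG := ASC.G_eq hq hq1 C D hs hA0 hA1
  have n1 : qPochInfC (q : ℂ) ((A : ℂ) * Complex.exp ((θ : ℂ) * Complex.I)) ≠ 0 := by
    apply ASC.qPochInfC_ne hq hq1
    rw [norm_mul, Complex.norm_exp_ofReal_mul_I, mul_one, Complex.norm_real, Real.norm_eq_abs,
      abs_of_pos hA0]
    exact hA1
  have n2 : qPochInfC (q : ℂ) ((A : ℂ) * Complex.exp (-(θ : ℂ) * Complex.I)) ≠ 0 := by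
    apply ASC.qPochInfC_ne hq hq1
    rw [norm_mul, ← Complex.ofReal_neg, Complex.norm_exp_ofReal_mul_I, mul_one,
      Complex.norm_real, Real.norm_eq_abs, abs_of_pos hA0]
    exact hA1
  rw [ASC.qPochInf_split hq hq1 (A * C) n, ASC.qPochInf_split hq hq1 (A * D) n] at hG
  have p1 : α * a * c * q ^ (n + 1) = A * C * q ^ n := by rw [hAC]; ring
  have p2 : α * b * q ^ (n + 1) / c = A * D * q ^ n := by rw [hAD]; ring
  rw [p1, p2]
  have hsum : ∑ j ∈ Finset.range (n + 1), w j * ASC.G q C D x (A * q ^ j)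
      = ASC.G q C D x A * ∑ k ∈ Finset.range (n + 1),
        qPoch q (q ^ (-(n : ℤ))) k * qPoch q (A * C * D * (s / α) * q ^ ((n : ℤ) - 1)) k * q ^ k /
          (qPoch q (A * C) k * qPoch q (A * D) k * qPoch q (A * (s / α)) k * qPoch q q k) *
        ∏ j ∈ Finset.range k, (1 - 2 * A * q ^ j * x + A ^ 2 * q ^ (2 * j)) := by
    rw [Finset.mul_sum]
    refine Finset.sum_congr rfl fun k hk => ?_
    have hk' : k ≤ n := by simpa [Nat.lt_succ_iff] using hk
    have c1 : qPoch q (A * C) k ≠ 0 := hAC ▸ hac k hk'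
    have c2 : qPoch q (A * D) k ≠ 0 := hAD ▸ hbc k hk'
    have c3 := haq k hk'
    have c4 := (ASC.qPoch_qq_pos hq hq1 k).ne'
    have hpar : A * C * D * (s / α) * q ^ ((n : ℤ) - 1) = a * b * q ^ (n + 1) := by
      have : A * C * D * (s / α) = a * b * q ^ 2 := by
        have : A * C * D * (s / α) = (A * (s / α)) * (C * D) := by ring
        rw [this, hAE, hC, hD]
        field_simp
        linear_combination b * hss
      rw [this, zpow_sub₀ hq.ne', zpow_natCast, zpow_one]
      field_simp
      ring
    have hi := ASC.G_iter hq hq1 C D hs hA0 hA1 k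
    rw [hpar, hAE]
    simp only [hw]
    have hi' : ASC.G q C D x (A * q ^ k) =
      (∏ j ∈ Finset.range k, (1 - 2 * A * q ^ j * x + A ^ 2 * q ^ (2 * j))) * ASC.G q C D x A
        / (qPoch q (A * C) k * qPoch q (A * D) k) := by
      rw [eq_div_iff (mul_ne_zero c1 c2), hi]; ring
    rw [hi']
    generalize (∏ j ∈ Finset.range k, (1 - 2 * A * q ^ j * x + A ^ 2 * q ^ (2 * j))) = P
    field_simp
  rw [hsum]
  unfold askeyWilson
  rw [hAE]
  generalize (∑ k ∈ Finset.range (n + 1), _ : ℝ) = S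
  have hG' : (ASC.G q C D x A : ℂ) = ((qPoch q (A * C) n * qPochInf q (A * C * q ^ n) *
      (qPoch q (A * D) n * qPochInf q (A * D * q ^ n)) : ℝ) : ℂ) /
      (qPochInfC (q : ℂ) ((A : ℂ) * Complex.exp ((θ : ℂ) * Complex.I)) *
        qPochInfC (q : ℂ) ((A : ℂ) * Complex.exp (-(θ : ℂ) * Complex.I))) := by
    rw [eq_div_iff (mul_ne_zero n1 n2), ← hG]; ring
  rw [Complex.ofReal_mul, hG', div_mul_eq_mul_div, div_mul_eq_mul_div, ← Complex.ofReal_mul,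
    ← Complex.ofReal_mul]
  congr 2
  have c3 := haq n le_rfl
  rw [← mul_pow, ← hA, zpow_neg, zpow_natCast]
  field_simp
end

section
/- Fix 0 < q < 1, 0 < a < q^{−1}, b < q^{−1} with b ≠ 0 and bq < 1, and c ∈ ℝ ∖ {0}; set γ = (1+abq²) − (acq + bq/c). Let h_n = ((abq²;q)_∞/(aq;q)_∞)·((1−abq)(aq)^n/(1−abq^{2n+1}))·((q;q)_n (bq;q)_n)/((aq;q)_n (abq;q)_n) and φ_n(x) = p_n(x;a,b;q)/√(h_n), φ_{−1} := 0. Then for every n ∈ ℕ and every x ≠ 0: (a(bq²x−1)(1−bqx)/(x(1−bq)))·(φ_n(qx) − φ_n(x)) + ((x−1)(1−bqx)/(x(1−bq)))·(φ_n(q^{−1}x) − φ_n(x)) + γ·((1−bqx)/(1−bq))·φ_n(x) = a_n^γ φ_{n+1}(x) + b_n^γ φ_n(x) + a_{n−1}^γ φ_{n−1}(x), where a_{−1}^γ := 0, a_n^γ = (bq√(aq)/(1−bq))·((1−acq^{n+1})(1−bq^{n+1}/c)/(1−abq^{2n+2}))·√((1−q^{n+1})(1−aq^{n+1})(1−bq^{n+1})(1−abq^{n+1})/((1−abq^{2n+1})(1−abq^{2n+3}))),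 and b_n^γ = q^{−n}(1−acq^{n+1})(1−bq^{n+1}/c)(1−abq^{n+1})(1−bq^{n+1})/((1−bq)(1−abq^{2n+1})(1−abq^{2n+2})) + ab²q^{n+2}(1−acq^{n})(1−bq^{n}/c)(1−q^{n})(1−aq^{n})/((1−bq)(1−abq^{2n})(1−abq^{2n+1})). -/
noncomputable def cfJ (q a s t : ℝ) (k : ℕ) : ℝ :=
  qPoch q s k * qPoch q t k / (qPoch q (a * q) k * qPoch q q k) * q ^ k

lemma qPoch_succ' (q a : ℝ) (k : ℕ) : qPoch q a (k + 1) = qPoch q a k * (1 - a * q ^ k) := by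
  simp [qPoch, Finset.prod_range_succ]

lemma qPoch_zero' (q a : ℝ) : qPoch q a 0 = 1 := by simp [qPoch]

lemma qPoch_shift (q a : ℝ) (k : ℕ) :
    (1 - a) * qPoch q (a * q) k = qPoch q a k * (1 - a * q ^ k) := by
  induction k with
  | zero => simp [qPoch]
  | succ k ih =>
    rw [qPoch_succ', qPoch_succ', ← mul_assoc, ih]; ring

lemma lt_one_mul {t r : ℝ} (ht : t < 1) (hr : 0 < r) (hr1 : r ≤ 1) : t * r < 1 := by
  by_cases h : t ≤ 0
  · nlinarith
  · push Not at h; nlinarith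

lemma qPoch_pos {q a : ℝ} (hq : 0 < q) (hq1 : q < 1) (ha : a < 1) (k : ℕ) : 0 < qPoch q a k := by
  unfold qPoch
  apply Finset.prod_pos
  intro j _
  have := lt_one_mul ha (pow_pos hq j) (pow_le_one₀ hq.le hq1.le)
  linarith

lemma qPoch_vanish {q : ℝ} (hq : 0 < q) {n k : ℕ} (h : n < k) :
    qPoch q (q ^ (-(n : ℤ))) k = 0 := by
  unfold qPoch
  apply Finset.prod_eq_zero (Finset.mem_range.2 h)
  rw [zpow_neg, zpow_natCast, inv_mul_cancel₀ (pow_pos hq n).ne', sub_self]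

lemma jac_eq {q : ℝ} (hq : 0 < q) (a b : ℝ) (n M : ℕ) (hM : n < M) (x : ℝ) :
    littleqJacobi q a b n x =
      ∑ k ∈ Finset.range M, cfJ q a (q ^ (-(n : ℤ))) (a * b * q ^ (n + 1)) k * x ^ k := by
  unfold littleqJacobi
  rw [← Finset.sum_subset (Finset.range_subset_range.2 (Nat.succ_le_of_lt hM))]
  · apply Finset.sum_congr rfl
    intro k _
    rw [cfJ, mul_pow]; ring
  · intro k _ hk
    have : n < k := by simpa using hk
    rw [cfJ, qPoch_vanish hq this]; simp

lemma cf_rel1 (q a s t : ℝ) (k : ℕ) :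
    (s - t) * cfJ q a s t k = s * (1 - t) * cfJ q a s (t * q) k
      - t * (1 - s) * cfJ q a (s * q) t k := by
  unfold cfJ
  have h1 := qPoch_shift q s k
  have h2 := qPoch_shift q t k
  linear_combination (qPoch q s k * s / (qPoch q (a * q) k * qPoch q q k) * q ^ k) * (-h2)
    + (qPoch q t k * t / (qPoch q (a * q) k * qPoch q q k) * q ^ k) * h1

lemma zp_succ {q : ℝ} (hq : 0 < q) (n : ℕ) :
    q ^ (-((n + 1 : ℕ) : ℤ)) * q = q ^ (-(n : ℤ)) := by
  rw [zpow_neg, zpow_neg, zpow_natCast, zpow_natCast, pow_succ]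
  field_simp

lemma jac_rel1 {q : ℝ} (hq : 0 < q) (a b : ℝ) (n : ℕ) (x : ℝ) :
    (1 - a * b * q ^ (2 * n + 3)) * littleqJacobi q a b (n + 1) x =
      (1 - a * b * q ^ (n + 2)) * littleqJacobi q a (b * q) (n + 1) x
      + a * b * q ^ (n + 2) * (1 - q ^ (n + 1)) * littleqJacobi q a (b * q) n x := by
  rw [jac_eq hq a b (n + 1) (n + 2) (by omega), jac_eq hq a (b * q) (n + 1) (n + 2) (by omega),
    jac_eq hq a (b * q) n (n + 2) (by omega), Finset.mul_sum, Finset.mul_sum, Finset.mul_sum,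
    ← Finset.sum_add_distrib]
  apply Finset.sum_congr rfl
  intro k _
  have h := cf_rel1 q a (q ^ (-((n + 1 : ℕ) : ℤ))) (a * b * q ^ (n + 2)) k
  rw [zp_succ hq] at h
  have e1 : a * (b * q) * q ^ (n + 1 + 1) = a * b * q ^ (n + 2) * q := by ring
  have e2 : a * (b * q) * q ^ (n + 1) = a * b * q ^ (n + 2) := by ring
  have e3 : a * b * q ^ (n + 1 + 1) = a * b * q ^ (n + 2) := by ring
  rw [e1, e2, e3]
  have hz : q ^ (n + 1) * q ^ (-((n + 1 : ℕ) : ℤ)) = 1 := by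
    rw [zpow_neg, zpow_natCast, mul_inv_cancel₀ (pow_pos hq _).ne']
  generalize cfJ q a (q ^ (-((n + 1 : ℕ) : ℤ))) (a * b * q ^ (n + 2)) k = X at *
  generalize cfJ q a (q ^ (-((n + 1 : ℕ) : ℤ))) (a * b * q ^ (n + 2) * q) k = Y at *
  generalize cfJ q a (q ^ (-(n : ℤ))) (a * b * q ^ (n + 2)) k = Z at *
  generalize q ^ (-((n + 1 : ℕ) : ℤ)) = s at *
  linear_combination (q ^ (n + 1) * x ^ k) * h +
    (x ^ k * (-X + (1 - a * b * q ^ (n + 2)) * Y + a * b * q ^ (n + 2) * Z)) * hz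


lemma cf_zero (q a s t : ℝ) : cfJ q a s t 0 = 1 := by simp [cfJ, qPoch]

lemma cf_succ {q a : ℝ} (hq : 0 < q) (hq1 : q < 1) (ha : a * q < 1) (s t : ℝ) (k : ℕ) :
    (1 - a * q ^ (k + 1)) * (1 - q ^ (k + 1)) * cfJ q a s t (k + 1) =
      q * (1 - s * q ^ k) * (1 - t * q ^ k) * cfJ q a s t k := by
  have h1 := (qPoch_pos hq hq1 ha k).ne'
  have h2 := (qPoch_pos hq hq1 hq1 k).ne'
  have h3 := (qPoch_pos hq hq1 ha (k + 1)).ne'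
  have h4 := (qPoch_pos hq hq1 hq1 (k + 1)).ne'
  rw [qPoch_succ'] at h3 h4
  have h3' := right_ne_zero_of_mul h3
  have h4' := right_ne_zero_of_mul h4
  have e1 : 1 - a * q ^ (k + 1) = 1 - a * q * q ^ k := by ring
  have e2 : 1 - q ^ (k + 1) = 1 - q * q ^ k := by ring
  unfold cfJ
  rw [qPoch_succ', qPoch_succ', qPoch_succ', qPoch_succ', e1, e2, pow_succ]
  generalize q ^ k = Q at *
  field_simp

/-- `s` is `q^{-n-1}`, `t` is `abq^{n+1}`. -/
lemma cf_rel2' {q a s t b : ℝ} (hq : 0 < q) (hq1 : q < 1) (ha : a * q < 1) (hb : a * b = s * t)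
    (k : ℕ) :
    (s - t) * (cfJ q a (s * q) (t * q) (k + 1) - b * q * cfJ q a (s * q) (t * q) k) =
      (b - t) * cfJ q a s (t * q) (k + 1) + (s - b) * cfJ q a (s * q) t (k + 1) := by
  have h1 := (qPoch_pos hq hq1 ha k).ne'
  have h2 := (qPoch_pos hq hq1 hq1 k).ne'
  have h3 := (qPoch_pos hq hq1 ha (k + 1)).ne'
  have h4 := (qPoch_pos hq hq1 hq1 (k + 1)).ne'
  rw [qPoch_succ'] at h3 h4
  have h3' := right_ne_zero_of_mul h3
  have h4' := right_ne_zero_of_mul h4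
  have f1 : qPoch q s (k + 1) = (1 - s) * qPoch q (s * q) k := by
    rw [qPoch_shift, qPoch_succ']
  have f2 : qPoch q t (k + 1) = (1 - t) * qPoch q (t * q) k := by
    rw [qPoch_shift, qPoch_succ']
  unfold cfJ
  rw [f1, f2, qPoch_succ', qPoch_succ', qPoch_succ', qPoch_succ', pow_succ]
  generalize q ^ k = Q at *
  generalize qPoch q (s * q) k = X
  generalize qPoch q (t * q) k = Y
  generalize qPoch q (a * q) k = Z at *
  generalize qPoch q q k = W at *
  have key : (s - t) * ((1 - s * q * Q) * (1 - t * q * Q) - b * (1 - a * q * Q) * (1 - q * Q)) =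
    (b - t) * (1 - s) * (1 - t * q * Q) + (s - b) * (1 - s * q * Q) * (1 - t) := by
    linear_combination ((s - t) * (q * Q) * (1 - q * Q)) * hb
  have e : X * Y / (Z * W) = X * Y * ((1 - a * q * Q) * (1 - q * Q)) /
      (Z * (1 - a * q * Q) * (W * (1 - q * Q))) := by
    field_simp
  rw [e]
  linear_combination (X * Y * Q * q / (Z * (1 - a * q * Q) * (W * (1 - q * Q)))) * key

lemma jac_rel2 {q : ℝ} (hq : 0 < q) (hq1 : q < 1) {a : ℝ} (ha : a * q < 1) (b : ℝ) (n : ℕ)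
    (x : ℝ) :
    (1 - a * b * q ^ (2 * n + 2)) * ((1 - b * q * x) * littleqJacobi q a (b * q) n x) =
      b * q ^ (n + 1) * (1 - a * q ^ (n + 1)) * littleqJacobi q a b (n + 1) x
      + (1 - b * q ^ (n + 1)) * littleqJacobi q a b n x := by
  have hz : q ^ (n + 1) * q ^ (-((n + 1 : ℕ) : ℤ)) = 1 := by
    rw [zpow_neg, zpow_natCast, mul_inv_cancel₀ (pow_pos hq _).ne']
  have hb : a * b = q ^ (-((n + 1 : ℕ) : ℤ)) * (a * b * q ^ (n + 1)) := by
    linear_combination (-a * b) * hz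
  have e1 : a * (b * q) * q ^ (n + 1) = a * b * q ^ (n + 1) * q := by ring
  have e3 : a * b * q ^ (n + 1 + 1) = a * b * q ^ (n + 1) * q := by ring
  have hk := fun k => cf_rel2' hq hq1 ha hb k
  rw [zp_succ hq] at hk
  have h1 : (1 - b * q * x) * littleqJacobi q a (b * q) n x = 1 + ∑ k ∈ Finset.range (n + 1),
      (cfJ q a (q ^ (-(n : ℤ))) (a * b * q ^ (n + 1) * q) (k + 1)
        - b * q * cfJ q a (q ^ (-(n : ℤ))) (a * b * q ^ (n + 1) * q) k) * x ^ (k + 1) := by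
    rw [sub_mul, one_mul]
    nth_rewrite 1 [jac_eq hq a (b * q) n (n + 2) (by omega)]
    rw [jac_eq hq a (b * q) n (n + 1) (by omega), Finset.sum_range_succ', cf_zero, e1,
      Finset.mul_sum, pow_zero, mul_one, add_sub_right_comm, ← Finset.sum_sub_distrib, add_comm]
    congr 1
    apply Finset.sum_congr rfl
    intro k _
    ring
  rw [h1, jac_eq hq a b (n + 1) (n + 2) (by omega), jac_eq hq a b n (n + 2) (by omega),
    Finset.sum_range_succ' _ (n + 1), Finset.sum_range_succ' _ (n + 1), cf_zero, cf_zero, e3, mul_add, mul_add, mul_add,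
    Finset.mul_sum, Finset.mul_sum, Finset.mul_sum]
  have hs : ∑ k ∈ Finset.range (n + 1), (1 - a * b * q ^ (2 * n + 2)) *
      ((cfJ q a (q ^ (-(n : ℤ))) (a * b * q ^ (n + 1) * q) (k + 1)
        - b * q * cfJ q a (q ^ (-(n : ℤ))) (a * b * q ^ (n + 1) * q) k) * x ^ (k + 1)) =
      ∑ k ∈ Finset.range (n + 1), b * q ^ (n + 1) * (1 - a * q ^ (n + 1)) *
        (cfJ q a (q ^ (-((n + 1 : ℕ) : ℤ))) (a * b * q ^ (n + 1) * q) (k + 1) * x ^ (k + 1)) +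
      ∑ k ∈ Finset.range (n + 1), (1 - b * q ^ (n + 1)) *
        (cfJ q a (q ^ (-(n : ℤ))) (a * b * q ^ (n + 1)) (k + 1) * x ^ (k + 1)) := by
    rw [← Finset.sum_add_distrib]
    apply Finset.sum_congr rfl
    intro k _
    have h := hk k
    generalize cfJ q a (q ^ (-(n : ℤ))) (a * b * q ^ (n + 1) * q) (k + 1) = X at *
    generalize cfJ q a (q ^ (-(n : ℤ))) (a * b * q ^ (n + 1) * q) k = X' at *
    generalize cfJ q a (q ^ (-((n + 1 : ℕ) : ℤ))) (a * b * q ^ (n + 1) * q) (k + 1) = Y at *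
    generalize cfJ q a (q ^ (-(n : ℤ))) (a * b * q ^ (n + 1)) (k + 1) = Z at *
    generalize q ^ (-((n + 1 : ℕ) : ℤ)) = s at *
    linear_combination (q ^ (n + 1) * x ^ (k + 1)) * h +
      (x ^ (k + 1) * (-(X - b * q * X') + Z)) * hz
  rw [hs]
  ring

lemma jac_eig {q : ℝ} (hq : 0 < q) (hq1 : q < 1) {a : ℝ} (ha : a * q < 1) (b : ℝ) (n : ℕ)
    (x : ℝ) :
    a * (b * q * x - 1) * (littleqJacobi q a b n (q * x) - littleqJacobi q a b n x)
      + (x - 1) * (littleqJacobi q a b n (x / q) - littleqJacobi q a b n x) =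
    (a * b * q * (q ^ n - 1) + q ^ (-(n : ℤ)) - 1) * x * littleqJacobi q a b n x := by
  have hM : ∀ M : ℕ, a * (b * q * x - 1) *
      (∑ k ∈ Finset.range M, cfJ q a (q ^ (-(n : ℤ))) (a * b * q ^ (n + 1)) k * (q * x) ^ k -
        ∑ k ∈ Finset.range M, cfJ q a (q ^ (-(n : ℤ))) (a * b * q ^ (n + 1)) k * x ^ k) +
      (x - 1) *
      (∑ k ∈ Finset.range M, cfJ q a (q ^ (-(n : ℤ))) (a * b * q ^ (n + 1)) k * (x / q) ^ k -
        ∑ k ∈ Finset.range M, cfJ q a (q ^ (-(n : ℤ))) (a * b * q ^ (n + 1)) k * x ^ k) -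
      (a * b * q * (q ^ n - 1) + q ^ (-(n : ℤ)) - 1) * x *
        ∑ k ∈ Finset.range M, cfJ q a (q ^ (-(n : ℤ))) (a * b * q ^ (n + 1)) k * x ^ k =
      cfJ q a (q ^ (-(n : ℤ))) (a * b * q ^ (n + 1)) M * (1 - q ^ M) * (1 - a * q ^ M) / q ^ M
        * x ^ M := by
    intro M
    induction M with
    | zero => simp
    | succ M ih =>
      have hc := cf_succ hq hq1 ha (q ^ (-(n : ℤ))) (a * b * q ^ (n + 1)) M
      simp only [Finset.sum_range_succ]
      have hz : q ^ (-(n : ℤ)) = (q ^ n)⁻¹ := by rw [zpow_neg, zpow_natCast]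
      have e : cfJ q a (q ^ (-(n : ℤ))) (a * b * q ^ (n + 1)) (M + 1) * (1 - q ^ (M + 1)) *
          (1 - a * q ^ (M + 1)) / q ^ (M + 1) = (q * (1 - q ^ (-(n : ℤ)) * q ^ M) *
          (1 - a * b * q ^ (n + 1) * q ^ M) *
          cfJ q a (q ^ (-(n : ℤ))) (a * b * q ^ (n + 1)) M) / q ^ (M + 1) := by
        rw [← hc]; ring
      rw [e, div_pow, mul_pow]
      generalize cfJ q a (q ^ (-(n : ℤ))) (a * b * q ^ (n + 1)) M = X at *
      have hstep : a * (b * q * x - 1) * (X * (q ^ M * x ^ M) - X * x ^ M) +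
          (x - 1) * (X * (x ^ M / q ^ M) - X * x ^ M) -
          (a * b * q * (q ^ n - 1) + q ^ (-(n : ℤ)) - 1) * x * (X * x ^ M) =
          q * (1 - q ^ (-(n : ℤ)) * q ^ M) * (1 - a * b * q ^ (n + 1) * q ^ M) * X / q ^ (M + 1)
            * x ^ (M + 1) - X * (1 - q ^ M) * (1 - a * q ^ M) / q ^ M * x ^ M := by
        rw [hz, pow_succ, pow_succ, pow_succ]
        have h1 := (pow_pos hq M).ne'
        have h2 := (pow_pos hq n).ne'
        generalize q ^ M = Q at *
        generalize q ^ n = N at *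
        generalize x ^ M = Y at *
        field_simp
        ring
      linear_combination ih + hstep
  have h := hM (n + 1)
  have h0 : cfJ q a (q ^ (-(n : ℤ))) (a * b * q ^ (n + 1)) (n + 1) = 0 := by
    rw [cfJ, qPoch_vanish hq (Nat.lt_succ_self n)]; simp
  rw [h0] at h
  simp only [← jac_eq hq a b n (n + 1) (Nat.lt_succ_self n)] at h
  linear_combination h

lemma jac_TF {q a b c γ : ℝ} (hq : 0 < q) (hq1 : q < 1) (ha : a * q < 1) (hbq : b * q < 1)
    (hc : c ≠ 0) (hγ : γ = (1 + a * b * q ^ 2) - (a * c * q + b * q / c)) (n : ℕ)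
    (hd : 1 - a * b * q ^ (2 * n + 2) ≠ 0) (x : ℝ) (hx : x ≠ 0) :
    a * (b * q ^ 2 * x - 1) * (1 - b * q * x) / (x * (1 - b * q))
        * (littleqJacobi q a (b * q) n (q * x) - littleqJacobi q a (b * q) n x)
      + (x - 1) * (1 - b * q * x) / (x * (1 - b * q))
        * (littleqJacobi q a (b * q) n (x / q) - littleqJacobi q a (b * q) n x)
      + γ * ((1 - b * q * x) / (1 - b * q)) * littleqJacobi q a (b * q) n x =
    (q ^ n)⁻¹ * (1 - a * c * q ^ (n + 1)) * (1 - b * q ^ (n + 1) / c) / (1 - b * q) *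
      ((b * q ^ (n + 1) * (1 - a * q ^ (n + 1)) * littleqJacobi q a b (n + 1) x
      + (1 - b * q ^ (n + 1)) * littleqJacobi q a b n x) / (1 - a * b * q ^ (2 * n + 2))) := by
  have h1 := jac_eig hq hq1 ha (b * q) n x
  have h2 := jac_rel2 hq hq1 ha b n x
  rw [← h2, mul_div_cancel_left₀ _ hd]
  have hb1 : 1 - b * q ≠ 0 := by linarith
  have hz : q ^ (-(n : ℤ)) = (q ^ n)⁻¹ := by rw [zpow_neg, zpow_natCast]
  rw [hz] at h1
  have hN := (pow_pos hq n).ne'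
  rw [pow_succ q n]
  have hΛ : (q ^ n)⁻¹ * (1 - a * c * (q ^ n * q)) * (1 - b * (q ^ n * q) / c) =
      a * (b * q) * q * (q ^ n - 1) + (q ^ n)⁻¹ - 1 + γ := by
    rw [hγ]; field_simp; ring
  rw [hΛ]
  generalize littleqJacobi q a (b * q) n (q * x) = X at *
  generalize littleqJacobi q a (b * q) n (x / q) = Y at *
  generalize littleqJacobi q a (b * q) n x = Z at *
  generalize a * (b * q) * q * (q ^ n - 1) + (q ^ n)⁻¹ - 1 = l at *
  field_simp
  linear_combination (1 - b * q * x) * h1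

lemma jac_zero (q a b x : ℝ) : littleqJacobi q a b 0 x = 1 := by
  simp [littleqJacobi, qPoch]

lemma sqrt_step {u S ρ W : ℝ} (hu : 0 ≤ u) (hρ : 0 ≤ ρ) (hW : 0 ≤ W) (h : u * S = ρ * W ^ 2) :
    Real.sqrt u * Real.sqrt S = Real.sqrt ρ * W := by
  rw [← Real.sqrt_mul hu, h, Real.sqrt_mul hρ, Real.sqrt_sq hW]

/-- Case two (shift in `b`): the unbounded q-difference operator
`T^γ = r·(L^{(a,bq)} + γ)`, `r(x) = (1−bqx)/(1−bq)`, `γ = (1+abq²) − (acq + bq/c)`,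
acts tridiagonally on the orthonormalised little q-Jacobi polynomials
`φ_n = p_n(·;a,b;q)/√(h_n)`. -/
theorem stmt_12 (q a b c : ℝ) (hq : 0 < q) (hq1 : q < 1)
    (ha0 : 0 < a) (ha1 : a < q⁻¹) (hb : b < q⁻¹) (hb0 : b ≠ 0) (hbq : b * q < 1)
    (hc : c ≠ 0)
    (γ : ℝ) (hγ : γ = (1 + a * b * q ^ 2) - (a * c * q + b * q / c))
    (h : ℕ → ℝ)
    (hh : ∀ n, h n = qPochInf q (a * b * q ^ 2) / qPochInf q (a * q)
        * ((1 - a * b * q) * (a * q) ^ n / (1 - a * b * q ^ (2 * n + 1)))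
        * (qPoch q q n * qPoch q (b * q) n)
        / (qPoch q (a * q) n * qPoch q (a * b * q) n))
    (φ : ℕ → ℝ → ℝ)
    (hφ : ∀ n x, φ n x = littleqJacobi q a b n x / Real.sqrt (h n))
    (A B : ℕ → ℝ)
    (hA : ∀ n : ℕ, A n =
      b * q * Real.sqrt (a * q) / (1 - b * q)
        * ((1 - a * c * q ^ (n + 1)) * (1 - b * q ^ (n + 1) / c)
            / (1 - a * b * q ^ (2 * n + 2)))
        * Real.sqrt ((1 - q ^ (n + 1)) * (1 - a * q ^ (n + 1)) * (1 - b * q ^ (n + 1))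
            * (1 - a * b * q ^ (n + 1))
            / ((1 - a * b * q ^ (2 * n + 1)) * (1 - a * b * q ^ (2 * n + 3)))))
    (hB : ∀ n : ℕ, B n =
      q ^ (-(n : ℤ)) * (1 - a * c * q ^ (n + 1)) * (1 - b * q ^ (n + 1) / c)
          * (1 - a * b * q ^ (n + 1)) * (1 - b * q ^ (n + 1))
          / ((1 - b * q) * (1 - a * b * q ^ (2 * n + 1)) * (1 - a * b * q ^ (2 * n + 2)))
        + a * b ^ 2 * q ^ (n + 2) * (1 - a * c * q ^ n) * (1 - b * q ^ n / c)
            * (1 - q ^ n) * (1 - a * q ^ n)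
          / ((1 - b * q) * (1 - a * b * q ^ (2 * n)) * (1 - a * b * q ^ (2 * n + 1)))) :
    ∀ (n : ℕ) (x : ℝ), x ≠ 0 →
      a * (b * q ^ 2 * x - 1) * (1 - b * q * x) / (x * (1 - b * q))
          * (φ n (q * x) - φ n x)
        + (x - 1) * (1 - b * q * x) / (x * (1 - b * q)) * (φ n (x / q) - φ n x)
        + γ * ((1 - b * q * x) / (1 - b * q)) * φ n x
      = A n * φ (n + 1) x + B n * φ n x
        + (if n = 0 then 0 else A (n - 1) * φ (n - 1) x) := by
  have haq : a * q < 1 := by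
    have := mul_lt_mul_of_pos_right ha1 hq
    rwa [inv_mul_cancel₀ hq.ne'] at this
  have haq0 : 0 < a * q := mul_pos ha0 hq
  have hq1' : ∀ m : ℕ, 0 < 1 - q ^ (m + 1) := fun m => by
    have := pow_lt_one₀ hq.le hq1 (Nat.succ_ne_zero m)
    exact sub_pos.2 this
  have hle : ∀ m : ℕ, q ^ m ≤ 1 := fun m => pow_le_one₀ hq.le hq1.le
  have hapos : ∀ m : ℕ, 0 < 1 - a * q ^ (m + 1) := fun m => by
    have := lt_one_mul haq (pow_pos hq m) (hle m)
    rw [pow_succ']; linarith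
  have hbpos : ∀ m : ℕ, 0 < 1 - b * q ^ (m + 1) := fun m => by
    have := lt_one_mul hbq (pow_pos hq m) (hle m)
    rw [pow_succ']; linarith
  have hab : a * b * q ^ 2 < 1 := by
    have := lt_one_mul hbq haq0 haq.le
    linarith
  have habpos : ∀ m : ℕ, 0 < 1 - a * b * q ^ (m + 2) := fun m => by
    have := lt_one_mul hab (pow_pos hq m) (hle m)
    rw [pow_add, mul_comm (q ^ m)]; linarith
  have hb1 : 1 - b * q ≠ 0 := by linarith
  set K := qPochInf q (a * b * q ^ 2) / qPochInf q (a * q) with hK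
  -- degenerate cases: all `φ n` vanish
  by_cases hab1 : 1 - a * b * q = 0
  · have hφ0 : ∀ n x, φ n x = 0 := by
      intro n x
      rw [hφ, hh, hab1]; simp
    intro n x _
    simp [hφ0]
  -- ratio
  obtain ⟨ρ, hρ⟩ : ∃ ρ : ℕ → ℝ, ∀ n, ρ n = a * q * ((1 - a * b * q ^ (2 * n + 1)) /
      (1 - a * b * q ^ (n + 1))) * ((1 - q ^ (n + 1)) * (1 - b * q ^ (n + 1))) /
      ((1 - a * b * q ^ (2 * n + 3)) * (1 - a * q ^ (n + 1))) := ⟨_, fun _ => rfl⟩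
  have hquot : ∀ n : ℕ, 0 < (1 - a * b * q ^ (2 * n + 1)) / (1 - a * b * q ^ (n + 1)) := by
    intro n
    rcases n with _ | n
    · simp only [mul_zero, zero_add, pow_one]
      rw [div_self hab1]; exact one_pos
    · exact div_pos (habpos (2 * n + 1)) (habpos n)
  have hne : ∀ n : ℕ, 1 - a * b * q ^ (n + 1) ≠ 0 := by
    intro n
    rcases n with _ | n
    · simpa using hab1
    · exact (habpos n).ne'
  have hρpos : ∀ n, 0 < ρ n := by
    intro n
    rw [hρ]
    have h1 := hquot n
    have h2 := hq1' n
    have h3 := hbpos n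
    have h4 : 0 < 1 - a * b * q ^ (2 * n + 3) := habpos (2 * n + 1)
    have h5 := hapos n
    positivity
  have hpa := fun n => (qPoch_pos hq hq1 haq n).ne'
  have hpab : ∀ n, qPoch q (a * b * q) n ≠ 0 := by
    intro n
    rw [qPoch, Finset.prod_ne_zero_iff]
    intro j _
    have := hne j
    rwa [pow_succ', ← mul_assoc] at this
  have hstep : ∀ n, h (n + 1) = h n * ρ n := by
    intro n
    have e1 := hpa n
    have e2 := hpab n
    have e3 := (hapos n).ne'
    have e4 := hne n
    have e5 : 1 - a * b * q ^ (2 * n + 3) ≠ 0 := hne (2 * n + 2)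
    have e6 := hne (2 * n)
    have f1 : ∀ y : ℝ, 1 - y * q * q ^ n = 1 - y * q ^ (n + 1) := fun y => by ring
    have f2 : 1 - q * q ^ n = 1 - q ^ (n + 1) := by ring
    have f3 : 2 * (n + 1) + 1 = 2 * n + 3 := by ring
    rw [hh, hh, hρ, qPoch_succ', qPoch_succ', qPoch_succ', qPoch_succ', f1, f1, f1, f2, f3,
      pow_succ (a * q)]
    generalize 1 - a * b * q ^ (2 * n + 3) = x1 at *
    generalize 1 - a * b * q ^ (2 * n + 1) = x2 at *
    generalize 1 - a * b * q ^ (n + 1) = x3 at *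
    generalize 1 - a * q ^ (n + 1) = x4 at *
    generalize (a * q) ^ n = x5 at *
    generalize K = k0 at *
    generalize qPoch q (a * q) n = x6 at *
    generalize qPoch q (a * b * q) n = x7 at *
    field_simp
  have h0 : h 0 = K := by
    rw [hh]; simp [qPoch_zero', div_self hab1]
  by_cases hKpos : K ≤ 0
  · have hneg : ∀ n, h n ≤ 0 := by
      intro n
      induction n with
      | zero => rw [h0]; exact hKpos
      | succ n ih => rw [hstep]; exact mul_nonpos_of_nonpos_of_nonneg ih (hρpos n).le
    have hφ0 : ∀ n x, φ n x = 0 := by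
      intro n x
      rw [hφ, Real.sqrt_eq_zero_of_nonpos (hneg n), div_zero]
    intro n x _
    simp [hφ0]
  push Not at hKpos
  have hpos : ∀ n, 0 < h n := by
    intro n
    induction n with
    | zero => rw [h0]; exact hKpos
    | succ n ih => rw [hstep]; exact mul_pos ih (hρpos n)
  have hsq : ∀ n, Real.sqrt (h (n + 1)) = Real.sqrt (h n) * Real.sqrt (ρ n) := fun n => by
    rw [hstep, Real.sqrt_mul (hpos n).le]
  have hspos : ∀ n, Real.sqrt (h n) ≠ 0 := fun n => (Real.sqrt_pos.2 (hpos n)).ne'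
  have hrpos : ∀ n, Real.sqrt (ρ n) ≠ 0 := fun n => (Real.sqrt_pos.2 (hρpos n)).ne'
  obtain ⟨A', hA'⟩ : ∃ A' : ℕ → ℝ, ∀ n, A' n = b * q / (1 - b * q)
        * ((1 - a * c * q ^ (n + 1)) * (1 - b * q ^ (n + 1) / c)
            / (1 - a * b * q ^ (2 * n + 2))) * ((1 - a * q ^ (n + 1)) *
        ((1 - a * b * q ^ (n + 1)) / (1 - a * b * q ^ (2 * n + 1)))) := ⟨_, fun _ => rfl⟩
  have hAA : ∀ n, A n = A' n * Real.sqrt (ρ n) := by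
    intro n
    have hW : 0 < (1 - a * q ^ (n + 1)) *
        ((1 - a * b * q ^ (n + 1)) / (1 - a * b * q ^ (2 * n + 1))) := by
      have := hquot n
      rw [← inv_div] 
      exact mul_pos (hapos n) (inv_pos.2 this)
    have := sqrt_step (S := (1 - q ^ (n + 1)) * (1 - a * q ^ (n + 1)) * (1 - b * q ^ (n + 1))
            * (1 - a * b * q ^ (n + 1))
            / ((1 - a * b * q ^ (2 * n + 1)) * (1 - a * b * q ^ (2 * n + 3)))) haq0.le
            (hρpos n).le hW.le (by
      rw [hρ]
      have e3 := (hapos n).ne'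
      have e4 := hne n
      have e5 : 1 - a * b * q ^ (2 * n + 3) ≠ 0 := hne (2 * n + 2)
      have e6 := hne (2 * n)
      generalize 1 - a * b * q ^ (2 * n + 3) = x1 at *
      generalize 1 - a * b * q ^ (2 * n + 1) = x2 at *
      generalize 1 - a * b * q ^ (n + 1) = x3 at *
      generalize 1 - a * q ^ (n + 1) = x4 at *
      field_simp)
    rw [hA, hA']
    linear_combination (b * q / (1 - b * q)
        * ((1 - a * c * q ^ (n + 1)) * (1 - b * q ^ (n + 1) / c)
            / (1 - a * b * q ^ (2 * n + 2)))) * this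
  intro n x hx
  rcases n with _ | n
  · have hT := jac_TF hq hq1 haq hbq hc hγ 0 (habpos 0).ne' x hx
    have hd : 1 - a * b * q ^ 2 ≠ 0 := (habpos 0).ne'
    simp only [jac_zero] at hT
    simp only [hφ, hAA, hA', hB, hsq, jac_zero, if_true]
    have s0 := hspos 0
    have r0 := hrpos 0
    generalize Real.sqrt (h 0) = s at *
    generalize Real.sqrt (ρ 0) = r at *
    simp only [zero_add, mul_zero, pow_zero, pow_one, sub_self, CharP.cast_eq_zero, neg_zero,
      zpow_zero, zero_mul, zero_div, add_zero, inv_one, one_mul, mul_one] at hT ⊢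
    rw [div_self hab1, hT]
    generalize 1 - a * b * q = y at *
    field_simp
  · have hT1 := jac_TF hq hq1 haq hbq hc hγ (n + 1) (habpos _).ne' x hx
    have hT0 := jac_TF hq hq1 haq hbq hc hγ n (habpos _).ne' x hx
    have hr := jac_rel1 hq a b n
    have d3 : 1 - a * b * q ^ (2 * n + 3) ≠ 0 := hne (2 * n + 2)
    have hr' : ∀ y, littleqJacobi q a b (n + 1) y =
      (1 - a * b * q ^ (n + 2)) / (1 - a * b * q ^ (2 * n + 3))
        * littleqJacobi q a (b * q) (n + 1) y
      + a * b * q ^ (n + 2) * (1 - q ^ (n + 1)) / (1 - a * b * q ^ (2 * n + 3))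
        * littleqJacobi q a (b * q) n y := by
      intro y
      rw [div_mul_eq_mul_div, div_mul_eq_mul_div, ← add_div, eq_div_iff d3, mul_comm, hr y]
    have main : a * (b * q ^ 2 * x - 1) * (1 - b * q * x) / (x * (1 - b * q))
          * (littleqJacobi q a b (n + 1) (q * x) - littleqJacobi q a b (n + 1) x)
        + (x - 1) * (1 - b * q * x) / (x * (1 - b * q))
          * (littleqJacobi q a b (n + 1) (x / q) - littleqJacobi q a b (n + 1) x)
        + γ * ((1 - b * q * x) / (1 - b * q)) * littleqJacobi q a b (n + 1) x
      = A' (n + 1) * littleqJacobi q a b (n + 2) x + B (n + 1) * littleqJacobi q a b (n + 1) x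
        + A' n * ρ n * littleqJacobi q a b n x := by
      have e0 : ∀ u v w X Y Z X' Y' Z' α β : ℝ,
          u * ((α * X + β * X') - (α * Y + β * Y')) + v * ((α * Z + β * Z') - (α * Y + β * Y'))
          + w * (α * Y + β * Y') = α * (u * (X - Y) + v * (Z - Y) + w * Y)
          + β * (u * (X' - Y') + v * (Z' - Y') + w * Y') := by intros; ring
      have hL := e0 (a * (b * q ^ 2 * x - 1) * (1 - b * q * x) / (x * (1 - b * q)))
        ((x - 1) * (1 - b * q * x) / (x * (1 - b * q))) (γ * ((1 - b * q * x) / (1 - b * q)))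
        (littleqJacobi q a (b * q) (n + 1) (q * x)) (littleqJacobi q a (b * q) (n + 1) x)
        (littleqJacobi q a (b * q) (n + 1) (x / q))
        (littleqJacobi q a (b * q) n (q * x)) (littleqJacobi q a (b * q) n x)
        (littleqJacobi q a (b * q) n (x / q))
        ((1 - a * b * q ^ (n + 2)) / (1 - a * b * q ^ (2 * n + 3)))
        (a * b * q ^ (n + 2) * (1 - q ^ (n + 1)) / (1 - a * b * q ^ (2 * n + 3)))
      rw [← hr' x, ← hr' (q * x), ← hr' (x / q), hT1, hT0] at hL
      rw [hL, hA', hA', hB, hρ, zpow_neg, zpow_natCast]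
      have d1 : 1 - a * b * q ^ (2 * n + 1) ≠ 0 := hne (2 * n)
      have d2 : 1 - a * b * q ^ (2 * n + 2) ≠ 0 := hne (2 * n + 1)
      have d4 : 1 - a * b * q ^ (2 * n + 4) ≠ 0 := hne (2 * n + 3)
      have d5 := hne n
      have d6 := (hapos n).ne'
      have g1 : 2 * (n + 1) = 2 * n + 2 := by ring
      rw [g1]
      simp only [add_assoc, Nat.reduceAdd]
      have p : ∀ m, q ^ (n + m) = q ^ n * q ^ m := fun m => pow_add q n m
      generalize 1 - a * b * q ^ (2 * n + 3) = x3 at *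
      generalize 1 - a * b * q ^ (2 * n + 1) = x1 at *
      generalize 1 - a * b * q ^ (2 * n + 2) = x2 at *
      generalize 1 - a * b * q ^ (2 * n + 4) = x4 at *
      generalize 1 - a * b * q ^ (n + 1) = x5 at *
      generalize 1 - a * q ^ (n + 1) = x6 at *
      generalize 1 - q ^ (n + 1) = x7 at *
      generalize littleqJacobi q a b (n + 2) x = X at *
      generalize littleqJacobi q a b (n + 1) x = Y at *
      generalize littleqJacobi q a b n x = Z at *
      rw [p 1, p 2, p 3]
      have hN := (pow_pos hq n).ne'
      generalize q ^ n = N at *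
      generalize 1 - b * q = x8 at *
      clear * - hN d1 d2 d3 d4 d5 d6 hb1 hc hq
      have hq' := hq.ne'
      field_simp
      ring
    have s0 := hspos n
    have r0 := hrpos n
    have s1 := hspos (n + 1)
    have r1 := hrpos (n + 1)
    have hrr : Real.sqrt (ρ n) ^ 2 = ρ n := Real.sq_sqrt (hρpos n).le
    have hs1 := hsq n
    have hif : (if n + 1 = 0 then 0 else A (n + 1 - 1) * φ (n + 1 - 1) x) = A n * φ n x := by simp
    rw [hif]
    simp only [hφ]
    have t1 : A (n + 1) * (littleqJacobi q a b (n + 1 + 1) x / Real.sqrt (h (n + 1 + 1))) =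
        A' (n + 1) * littleqJacobi q a b (n + 2) x / Real.sqrt (h (n + 1)) := by
      rw [hAA, hsq (n + 1)]; field_simp
    have t2 : A n * (littleqJacobi q a b n x / Real.sqrt (h n)) =
        A' n * ρ n * littleqJacobi q a b n x / Real.sqrt (h (n + 1)) := by
      rw [hAA, hs1, ← hrr]
      have : Real.sqrt (Real.sqrt (ρ n) ^ 2) = Real.sqrt (ρ n) := by rw [hrr]
      rw [this]
      field_simp
    rw [t1, t2]
    linear_combination (1 / Real.sqrt (h (n + 1))) * main
end
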